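/- arXiv:2201.03838 — 2 statements merged into one kernel-verified Lean document; each statement's English description precedes it below -/
import Mathlib

section
/- Let f ∈ ℂ(z) be a rational function that is not the derivative of any rational function. Let L be a differential field of characteristic zero containing (an embedded copy of) ℂ on which the derivation δ vanishes, and let K be a differential subfield of L containing ℂ (i.e. δ(K) ⊆ K). Suppose y ∈ L satisfies δ(δy) = δy · f(y) and δy ≠ 0. If y is transcendental over K, then δy is transcendental over the field K(y); equivalently, y and δy are algebraically independent over K. (This is the key content of the strong minimality of the Poizat equation z'' = z'·f(z), z' ≠ 0.) -/
/-!
Let `u = δ y`. The map `X ↦ y` embeds `K(X)` in `L`, and there `δ = D + u ∂`, where `D` acts on the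
coefficients and `∂ = ∂/∂X`. If `u` is algebraic over `K(X)` of degree `n`, applying `δ` to its
minimal polynomial gives a polynomial of degree at most `n` that vanishes at `u`, hence a multiple
of the minimal polynomial. Comparing the leading and the constant coefficients produces
`a ≠ 0` and `b` in `K(X)` with `D a = (∂ b + n f) a`.

By Hermite reduction `f = ∂ h + p / q` with `p / q` reduced and `q` squarefree over `ℂ`, and `q` is
not constant because `f` is not a derivative. At a place of `K(X)` above a zero of `q`, `q` is a
uniformizer with `D q = 0`, so `D a / a` has no pole. But `n p / q` has a pole of order exactly one
there, while `∂ (b + n h)` never does: a contradiction.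
-/

open Polynomial WithZero IsDedekindDomain

section ExtensionOfDerivations

/-- The extension of a derivation of `A` to a formally étale `A`-algebra `B`, such as a
localization of `A`: it is induced by the isomorphism `B ⊗[A] Ω[A⁄R] ≃ Ω[B⁄R]`. -/
noncomputable def extendDerivation {R A : Type*} (B : Type*) [CommRing R] [CommRing A] [CommRing B]
    [Algebra R A] [Algebra R B] [Algebra A B] [IsScalarTower R A B] [Algebra.FormallyEtale A B]
    (d : Derivation R A A) : Derivation R B B :=
  ((((Algebra.linearMap A B).compDer d).liftKaehlerDifferential.liftBaseChange B) ∘ₗ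
    (KaehlerDifferential.tensorKaehlerEquivOfFormallyEtale R A B).symm.toLinearMap).compDer
      (KaehlerDifferential.D R B)

theorem extendDerivation_algebraMap {R A B : Type*} [CommRing R] [CommRing A] [CommRing B]
    [Algebra R A] [Algebra R B] [Algebra A B] [IsScalarTower R A B] [Algebra.FormallyEtale A B]
    (d : Derivation R A A) (a : A) :
    extendDerivation B d (algebraMap A B a) = algebraMap A B (d a) := by
  simp [extendDerivation,
    KaehlerDifferential.tensorKaehlerEquivOfFormallyEtale_symm_D_algebraMap]

theorem derivation_ext_of_isFractionRing {R A F M : Type*} [CommRing R] [CommRing A] [Field F]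
    [Algebra A F] [IsFractionRing A F] [Algebra R F] [AddCommGroup M] [Module R M] [Module F M]
    {d₁ d₂ : Derivation R F M}
    (h : ∀ a : A, d₁ (algebraMap A F a) = d₂ (algebraMap A F a)) : d₁ = d₂ := by
  ext x
  obtain ⟨a, b, -, rfl⟩ := IsFractionRing.div_surjective (A := A) x
  simp only [Derivation.leibniz_div, h]

end ExtensionOfDerivations

section Valuation

variable {R F : Type*} [CommRing R] [Field F] [Algebra R F] {v : Valuation F ℤᵐ⁰}
  {d : Derivation R F F}

theorem exists_derivation_eq_mul_of_uniformizer (hd : ∀ x, v x ≤ 1 → v (d x) ≤ 1) {t : F}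
    (ht : v t = exp (-1)) {x : F} (hx : x ≠ 0) :
    ∃ (m : ℤ) (w : F), v x = exp (-m) ∧ v w ≤ 1 ∧ d x = x * (m * (d t / t) + w) := by
  have ht0 : t ≠ 0 := (v.ne_zero_iff).mp (by simp [ht])
  obtain ⟨m, hm⟩ : ∃ m : ℤ, v x = exp (-m) :=
    ⟨-log (v x), by rw [neg_neg, exp_log (v.ne_zero_iff.mpr hx)]⟩
  have hvt : v (t ^ m) = v x := by rw [map_zpow₀, ht, hm, ← exp_zsmul]; simp
  set e := x / t ^ m with he
  have hve : v e = 1 := by rw [he, map_div₀, hvt, div_self (v.ne_zero_iff.mpr hx)]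
  have he0 : e ≠ 0 := v.ne_zero_iff.mp (by simp [hve])
  refine ⟨m, d e / e, hm, by rw [map_div₀, hve, div_one]; exact hd e hve.le, ?_⟩
  have hxe : x = t ^ m * e := by rw [he, mul_div_cancel₀ _ (zpow_ne_zero m ht0)]
  rw [hxe, d.leibniz, d.leibniz_zpow, zpow_sub_one₀ ht0]
  simp only [smul_eq_mul, zsmul_eq_mul]
  field_simp
  ring

theorem valuation_derivation_le_mul_exp_one (hd : ∀ x, v x ≤ 1 → v (d x) ≤ 1) {t : F}
    (ht : v t = exp (-1)) (x : F) : v (d x) ≤ v x * exp 1 := by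
  obtain rfl | hx := eq_or_ne x 0
  · simp
  obtain ⟨m, w, -, hw, hdx⟩ := exists_derivation_eq_mul_of_uniformizer hd ht hx
  rw [hdx, map_mul]
  gcongr
  have hm : v (m : F) ≤ 1 := intCast_mem v.integer m
  have hdt : v (d t / t) ≤ exp 1 := by
    rw [map_div₀, ht, exp_neg, div_inv_eq_mul]
    exact mul_le_of_le_one_left' (hd t (ht.trans_le (by decide)))
  refine v.map_add_le ?_ (hw.trans (by decide))
  rw [map_mul]
  exact (mul_le_of_le_one_left' hm).trans hdt

theorem valuation_eq_exp_neg_one_of_derivation (hd : ∀ x, v x ≤ 1 → v (d x) ≤ 1) {t : F}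
    (ht : v t = exp (-1)) {x : F} (hx : v x < 1) (hdx : v (d x) = 1) : v x = exp (-1) := by
  have hle := valuation_derivation_le_mul_exp_one hd ht x
  have hx0 : v x ≠ 0 := by rintro h; simp [h, hdx] at hle
  rw [hdx] at hle
  rw [← exp_log hx0, ← exp_zero] at hx hle
  rw [← exp_log hx0]
  rw [← exp_add, exp_le_exp] at hle
  rw [exp_lt_exp] at hx
  congr 1
  omega

theorem valuation_derivation_le_of_derivation_uniformizer_eq_zero
    (hd : ∀ x, v x ≤ 1 → v (d x) ≤ 1) {t : F} (ht : v t = exp (-1)) (hdt : d t = 0) (x : F) :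
    v (d x) ≤ v x := by
  obtain rfl | hx := eq_or_ne x 0
  · simp
  obtain ⟨m, w, -, hw, hdx⟩ := exists_derivation_eq_mul_of_uniformizer hd ht hx
  rw [hdx, hdt, zero_div, mul_zero, zero_add, map_mul]
  exact mul_le_of_le_one_right' hw

theorem valuation_derivation_ne_exp_one (hd : ∀ x, v x ≤ 1 → v (d x) ≤ 1) {t : F}
    (ht : v t = exp (-1)) (hdt : v (d t) = 1) (hint : ∀ m : ℤ, m ≠ 0 → v (m : F) = 1) (x : F) :
    v (d x) ≠ exp 1 := by
  intro h
  have hx : 1 < v x := by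
    by_contra! hx
    exact absurd (h ▸ hd x hx) (by decide)
  obtain ⟨m, w, hxm, hw, hdx⟩ :=
    exists_derivation_eq_mul_of_uniformizer hd ht (v.ne_zero_iff.mp (zero_lt_one.trans hx).ne')
  have hm : m < 0 := by rwa [hxm, ← exp_zero, exp_lt_exp, neg_pos] at hx
  have hpole : v (m * (d t / t)) = exp 1 := by
    rw [map_mul, map_div₀, hint m hm.ne, hdt, ht, one_mul, one_div, exp_neg, inv_inv]
  rw [hdx, map_mul, v.map_add_eq_of_lt_left (by rw [hpole]; exact hw.trans_lt (by decide)), hpole,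
    hxm, ← exp_add, exp_inj] at h
  omega

theorem valuation_derivation_le_one {A : Type*} [CommRing A] [IsDedekindDomain A] [Algebra A F]
    [IsFractionRing A F] {P : HeightOneSpectrum A}
    (hd : ∀ a : A, P.valuation F (d (algebraMap A F a)) ≤ 1) {x : F} (hx : P.valuation F x ≤ 1) :
    P.valuation F (d x) ≤ 1 := by
  obtain ⟨a, s, hs⟩ := P.exists_primeCompl_mul_eq_of_integer x hx
  have hvs : P.valuation F (algebraMap A F s) = 1 := P.valuation_eq_one_iff_notMem.mpr s.2
  have hda := congrArg d hs
  rw [d.leibniz, smul_eq_mul, smul_eq_mul, ← eq_sub_iff_add_eq'] at hda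
  calc P.valuation F (d x) = P.valuation F (algebraMap A F s * d x) := by rw [map_mul, hvs, one_mul]
    _ ≤ 1 := by
      rw [hda]
      exact (P.valuation F).map_sub_le (hd a) (by rw [map_mul]; exact mul_le_one' hx (hd s))

end Valuation

section PolynomialDerivations

variable {R A : Type*} [CommRing R] [CommRing A] [Algebra R A]

/-- The derivation of `A[X]` acting through `d` on the coefficients, so that `X` is a constant. -/
noncomputable def mapCoeffsDeriv (d : Derivation R A A) : Derivation R A[X] A[X] :=
  PolynomialModule.equivPolynomialSelf.compDer d.mapCoeffs

theorem coeff_mapCoeffsDeriv (d : Derivation R A A) (p : A[X]) (i : ℕ) :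
    (mapCoeffsDeriv d p).coeff i = d (p.coeff i) := rfl

theorem mapCoeffsDeriv_monomial (d : Derivation R A A) (n : ℕ) (a : A) :
    mapCoeffsDeriv d (monomial n a) = monomial n (d a) := by
  ext i
  simp [coeff_mapCoeffsDeriv, coeff_monomial, apply_ite d]

theorem derivation_aeval_eq {B : Type*} [CommRing B] [Algebra R B] [Algebra A B]
    {d : Derivation R A A} {δ : Derivation R B B}
    (hd : ∀ a, δ (algebraMap A B a) = algebraMap A B (d a)) (x : B) (p : A[X]) :
    δ (aeval x p) = aeval x (mapCoeffsDeriv d p) + aeval x (derivative p) * δ x := by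
  rw [d.apply_aeval_eq' δ (Algebra.linearMap A B) (fun a ↦ (hd a).symm), smul_eq_mul]
  simp [mapCoeffsDeriv]

end PolynomialDerivations

section RationalFunctions

variable {R K : Type*} [CommRing R] [Field K] [Algebra R K]

instance : Algebra.FormallyEtale K[X] (RatFunc K) :=
  Algebra.FormallyEtale.of_isLocalization (nonZeroDivisors K[X])

variable (K) in
/-- The derivation `∂ / ∂X` of `K(X)`. -/
noncomputable def ratDeriv : Derivation K (RatFunc K) (RatFunc K) :=
  extendDerivation (RatFunc K) derivative'

/-- The derivation of `K(X)` that extends the derivation `d` of `K` and has `X` as a constant. -/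
noncomputable def coeffDeriv (d : Derivation R K K) : Derivation R (RatFunc K) (RatFunc K) :=
  extendDerivation (RatFunc K) (mapCoeffsDeriv d)

theorem ratDeriv_algebraMap (p : K[X]) :
    ratDeriv K (algebraMap K[X] (RatFunc K) p) = algebraMap K[X] (RatFunc K) (derivative p) :=
  extendDerivation_algebraMap _ p

theorem coeffDeriv_algebraMap (d : Derivation R K K) (p : K[X]) :
    coeffDeriv d (algebraMap K[X] (RatFunc K) p) =
      algebraMap K[X] (RatFunc K) (mapCoeffsDeriv d p) :=
  extendDerivation_algebraMap _ p

theorem ratDeriv_algebraMap_div (p : K[X]) {q : K[X]} (hq : q ≠ 0) :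
    ratDeriv K (algebraMap K[X] (RatFunc K) p / algebraMap K[X] (RatFunc K) q) =
      algebraMap K[X] (RatFunc K) (derivative p * q - p * derivative q) /
        algebraMap K[X] (RatFunc K) (q ^ 2) := by
  have hq' := RatFunc.algebraMap_ne_zero hq
  rw [Derivation.leibniz_div, ratDeriv_algebraMap, ratDeriv_algebraMap]
  simp only [smul_eq_mul, map_sub, map_mul, map_pow]
  field_simp

theorem mem_range_ratDeriv_iff {f : RatFunc K} :
    f ∈ Set.range (ratDeriv K) ↔ ∃ r s : K[X], s ≠ 0 ∧
      f = algebraMap K[X] (RatFunc K) (derivative r * s - r * derivative s) /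
        algebraMap K[X] (RatFunc K) (s ^ 2) := by
  constructor
  · rintro ⟨h, rfl⟩
    refine ⟨h.num, h.denom, h.denom_ne_zero, ?_⟩
    rw [← ratDeriv_algebraMap_div _ h.denom_ne_zero, RatFunc.num_div_denom]
  · rintro ⟨r, s, hs, rfl⟩
    exact ⟨_, ratDeriv_algebraMap_div r hs⟩

theorem polynomial_derivative_surjective [CharZero K] :
    Function.Surjective (derivative : K[X] → K[X]) := fun p ↦ by
  induction p using Polynomial.induction_on' with
  | add p q hp hq =>
    obtain ⟨r, rfl⟩ := hp
    obtain ⟨s, rfl⟩ := hq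
    exact ⟨r + s, derivative_add⟩
  | monomial n a =>
    have hn : (n + 1 : K) ≠ 0 := n.cast_add_one_ne_zero
    exact ⟨monomial (n + 1) (a / (n + 1)), by rw [derivative_monomial_succ, div_mul_cancel₀ _ hn]⟩

theorem algebraMap_mem_range_ratDeriv [CharZero K] (p : K[X]) :
    algebraMap K[X] (RatFunc K) p ∈ Set.range (ratDeriv K) := by
  obtain ⟨r, rfl⟩ := polynomial_derivative_surjective p
  exact ⟨_, ratDeriv_algebraMap r⟩

end RationalFunctions

section HermiteReduction

variable {K : Type*} [Field K]

theorem div_pow_succ_sub_ratDeriv {π w : K[X]} (hπ : π ≠ 0) (hw : w ≠ 0) (a b : K[X]) (m : ℕ) :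
    algebraMap K[X] (RatFunc K) (a * π - m * b * derivative π * w) /
        algebraMap K[X] (RatFunc K) (π ^ (m + 1) * w) -
      ratDeriv K (algebraMap K[X] (RatFunc K) b / algebraMap K[X] (RatFunc K) (π ^ m)) =
      algebraMap K[X] (RatFunc K) (a - derivative b * w) /
        algebraMap K[X] (RatFunc K) (π ^ m * w) := by
  have hπ' := RatFunc.algebraMap_ne_zero hπ
  have hw' := RatFunc.algebraMap_ne_zero hw
  obtain _ | m := m
  · simp only [ratDeriv_algebraMap, map_sub, map_mul, Nat.cast_zero, zero_mul, sub_zero, pow_zero,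
      zero_add, pow_one, one_mul, map_one, div_one]
    field_simp
  rw [ratDeriv_algebraMap_div _ (pow_ne_zero _ hπ), derivative_pow_succ]
  simp only [map_sub, map_mul, map_pow, map_natCast, map_add, map_one, Nat.cast_add, Nat.cast_one]
  field_simp
  ring

variable [CharZero K]

theorem exists_eq_mul_sub_natCast_mul_derivative_mul {π w : K[X]} (hπ : Irreducible π)
    (hw : ¬π ∣ w) {m : ℕ} (hm : m ≠ 0) (p : K[X]) :
    ∃ a b, p = a * π - m * b * derivative π * w := by
  have hmu : IsUnit (m : K[X]) := by
    rw [← C_eq_natCast, isUnit_C]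
    exact (Nat.cast_ne_zero.mpr hm).isUnit
  obtain ⟨a, b, hab⟩ : IsCoprime π (m * (derivative π * w)) :=
    (isCoprime_mul_unit_left_right hmu _ _).mpr
      (hπ.separable.mul_right (hπ.coprime_iff_not_dvd.mpr hw))
  exact ⟨p * a, -p * b, by linear_combination -p * hab⟩

theorem exists_natDegree_denom_sub_ratDeriv_lt {f : RatFunc K} (hf : ¬Squarefree f.denom) :
    ∃ h, (f - ratDeriv K h).denom.natDegree < f.denom.natDegree := by
  obtain ⟨π, hπ, hsq⟩ : ∃ π, Irreducible π ∧ π ^ 2 ∣ f.denom := by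
    simpa [squarefree_iff_no_irreducibles f.denom_ne_zero, sq] using hf
  have hfin := FiniteMultiplicity.of_not_isUnit hπ.not_isUnit f.denom_ne_zero
  obtain ⟨w, hden, hw⟩ := hfin.exists_eq_pow_mul_and_not_dvd
  have hw0 : w ≠ 0 := by rintro rfl; simp at hw
  obtain ⟨m, hm⟩ := Nat.exists_eq_add_of_le' (hfin.le_multiplicity_of_pow_dvd hsq)
  rw [hm] at hden
  obtain ⟨a, b, hnum⟩ :=
    exists_eq_mul_sub_natCast_mul_derivative_mul hπ hw m.succ_ne_zero f.num
  refine ⟨algebraMap K[X] (RatFunc K) b / algebraMap K[X] (RatFunc K) (π ^ (m + 1)), ?_⟩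
  have hdvd : (f - ratDeriv K (algebraMap K[X] (RatFunc K) b /
      algebraMap K[X] (RatFunc K) (π ^ (m + 1)))).denom ∣ π ^ (m + 1) * w := by
    nth_rw 1 [← f.num_div_denom]
    rw [hnum, hden, div_pow_succ_sub_ratDeriv hπ.ne_zero hw0]
    exact RatFunc.denom_div_dvd _ _
  have hne : π ^ (m + 1) * w ≠ 0 := mul_ne_zero (pow_ne_zero _ hπ.ne_zero) hw0
  refine (natDegree_le_of_dvd hdvd hne).trans_lt ?_
  rw [hden, pow_succ' π (m + 1), mul_assoc, natDegree_mul hπ.ne_zero hne]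
  exact Nat.lt_add_of_pos_left hπ.natDegree_pos

theorem exists_squarefree_denom_sub_ratDeriv (f : RatFunc K) :
    ∃ h, Squarefree (f - ratDeriv K h).denom := by
  induction hn : f.denom.natDegree using Nat.strong_induction_on generalizing f with
  | _ n ih =>
  by_cases hf : Squarefree f.denom
  · exact ⟨0, by simpa⟩
  obtain ⟨h, hlt⟩ := exists_natDegree_denom_sub_ratDeriv_lt hf
  obtain ⟨h', hsq⟩ := ih _ (hn ▸ hlt) _ rfl
  exact ⟨h + h', by rwa [map_add, ← sub_sub]⟩

theorem exists_eq_ratDeriv_add_div_of_notMem_range {f : RatFunc K}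
    (hf : f ∉ Set.range (ratDeriv K)) :
    ∃ (h : RatFunc K) (p q : K[X]), q.Separable ∧ ¬IsUnit q ∧ IsCoprime p q ∧
      f = ratDeriv K h + algebraMap K[X] (RatFunc K) p / algebraMap K[X] (RatFunc K) q := by
  obtain ⟨h, hsq⟩ := exists_squarefree_denom_sub_ratDeriv f
  refine ⟨h, _, _, PerfectField.separable_iff_squarefree.mpr hsq, fun hunit ↦ hf ?_,
    RatFunc.isCoprime_num_denom _, by rw [RatFunc.num_div_denom, add_sub_cancel]⟩
  obtain ⟨r, hr⟩ := algebraMap_mem_range_ratDeriv (f - ratDeriv K h).num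
  refine ⟨h + r, ?_⟩
  have hone : (f - ratDeriv K h).denom = 1 := (RatFunc.monic_denom _).eq_one_of_isUnit hunit
  have hpoly := RatFunc.num_div_denom (f - ratDeriv K h)
  rw [hone, map_one, div_one] at hpoly
  rw [map_add, hr, hpoly, add_sub_cancel]

end HermiteReduction

section ConstantSimplePole

variable {R S F : Type*} [CommRing R] [CommRing S] [Field F] [Algebra R F] [Algebra S F]
  {v : Valuation F ℤᵐ⁰} {d₁ : Derivation R F F} {d₂ : Derivation S F F}

theorem derivation_ne_of_simple_pole (hd₁ : ∀ x, v x ≤ 1 → v (d₁ x) ≤ 1)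
    (hd₂ : ∀ x, v x ≤ 1 → v (d₂ x) ≤ 1) {t : F} (ht : v t = exp (-1)) (hd₁t : d₁ t = 0)
    (hd₂t : v (d₂ t) = 1) (hint : ∀ m : ℤ, m ≠ 0 → v (m : F) = 1) {a c : F} (ha : a ≠ 0)
    (hc : v c = exp 1) (b : F) : d₁ a ≠ (d₂ b + c) * a := by
  intro h
  have hle : v (d₂ b + c) ≤ 1 := by
    have hda := valuation_derivation_le_of_derivation_uniformizer_eq_zero hd₁ ht hd₁t a
    rw [h, map_mul] at hda
    exact (mul_le_iff_le_one_left (v.pos_iff.mpr ha)).mp hda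
  refine valuation_derivation_ne_exp_one hd₂ ht hd₂t hint b ?_
  calc v (d₂ b) = v (d₂ b + c - c) := by rw [add_sub_cancel_right]
    _ = v c := v.map_sub_eq_of_lt_right (hle.trans_lt (by rw [hc]; decide))
    _ = exp 1 := hc

end ConstantSimplePole

section ConstantSimplePoleRatFunc

variable {R K : Type*} [CommRing R] [Field K] [Algebra R K] {P : HeightOneSpectrum K[X]}

theorem valuation_ratDeriv_le_one {x : RatFunc K} (hx : P.valuation (RatFunc K) x ≤ 1) :
    P.valuation (RatFunc K) (ratDeriv K x) ≤ 1 :=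
  valuation_derivation_le_one (fun p ↦ by rw [ratDeriv_algebraMap]; exact P.valuation_le_one _) hx

theorem valuation_coeffDeriv_le_one (d : Derivation R K K) {x : RatFunc K}
    (hx : P.valuation (RatFunc K) x ≤ 1) : P.valuation (RatFunc K) (coeffDeriv d x) ≤ 1 :=
  valuation_derivation_le_one (fun p ↦ by rw [coeffDeriv_algebraMap]; exact P.valuation_le_one _) hx

theorem valuation_intCast_eq_one [CharZero K] {m : ℤ} (hm : m ≠ 0) :
    P.valuation (RatFunc K) (m : RatFunc K) = 1 := by
  rw [← map_intCast (algebraMap K[X] (RatFunc K)), P.valuation_eq_one_iff_notMem]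
  refine fun h ↦ P.isPrime.ne_top (P.asIdeal.eq_top_of_isUnit_mem h ?_)
  rw [← C_eq_intCast, isUnit_C]
  exact (Int.cast_ne_zero.mpr hm).isUnit

theorem valuation_eq_one_of_isCoprime {p q : K[X]} (hpq : IsCoprime p q) (hq : q ∈ P.asIdeal) :
    P.valuation (RatFunc K) (algebraMap K[X] (RatFunc K) p) = 1 := by
  rw [P.valuation_eq_one_iff_notMem]
  intro hp
  obtain ⟨a, b, hab⟩ := hpq
  refine P.isPrime.ne_top ((Ideal.eq_top_iff_one _).mpr (hab ▸ ?_))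
  exact add_mem (P.asIdeal.mul_mem_left a hp) (P.asIdeal.mul_mem_left b hq)

theorem valuation_eq_exp_neg_one_of_separable {q : K[X]} (hsep : q.Separable)
    (hq : q ∈ P.asIdeal) :
    P.valuation (RatFunc K) (algebraMap K[X] (RatFunc K) q) = exp (-1) := by
  obtain ⟨t, ht⟩ := P.valuation_exists_uniformizer (RatFunc K)
  refine valuation_eq_exp_neg_one_of_derivation (fun _ ↦ valuation_ratDeriv_le_one) ht
    ((P.valuation_lt_one_iff_mem q).mpr hq) ?_
  rw [ratDeriv_algebraMap]
  exact valuation_eq_one_of_isCoprime hsep.symm hq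

theorem exists_heightOneSpectrum_mem {A : Type*} [CommRing A] {q : A} (hq0 : q ≠ 0)
    (hq : ¬IsUnit q) : ∃ P : HeightOneSpectrum A, q ∈ P.asIdeal := by
  obtain ⟨M, hM, hqM⟩ := exists_max_ideal_of_mem_nonunits (mem_nonunits_iff.mpr hq)
  exact ⟨⟨M, hM.isPrime, (Submodule.ne_bot_iff M).mpr ⟨q, hqM, hq0⟩⟩, hqM⟩

theorem coeffDeriv_ne_of_constant_pole [CharZero K] {d : Derivation R K K} {p q : K[X]}
    (hsep : q.Separable) (hq : ¬IsUnit q) (hpq : IsCoprime p q) (hdq : mapCoeffsDeriv d q = 0)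
    {n : ℤ} (hn : n ≠ 0) {a : RatFunc K} (ha : a ≠ 0) (b : RatFunc K) :
    coeffDeriv d a ≠
      (ratDeriv K b + n * (algebraMap K[X] (RatFunc K) p / algebraMap K[X] (RatFunc K) q)) * a := by
  obtain ⟨P, hqP⟩ := exists_heightOneSpectrum_mem hsep.ne_zero hq
  have hvq := valuation_eq_exp_neg_one_of_separable hsep hqP
  refine derivation_ne_of_simple_pole (fun _ ↦ valuation_coeffDeriv_le_one d)
    (fun _ ↦ valuation_ratDeriv_le_one) hvq ?_ ?_ (fun _ ↦ valuation_intCast_eq_one) ha ?_ b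
  · rw [coeffDeriv_algebraMap, hdq, map_zero]
  · rw [ratDeriv_algebraMap]
    exact valuation_eq_one_of_isCoprime hsep.symm hqP
  · rw [map_mul, map_div₀, valuation_intCast_eq_one hn, valuation_eq_one_of_isCoprime hpq hqP, hvq,
      one_mul, one_div, exp_neg, inv_inv]

end ConstantSimplePoleRatFunc

section AlgebraicRelation

variable {R F L : Type*} [CommRing R] [Field F] [Field L] [Algebra R F] [Algebra R L] [Algebra F L]

/-- The polynomial `P^D + X P^∂ + g X P'` attached to `P`, where the superscripts mean action on the
coefficients. If `δ = D + u ∂` on `F` and `δ u = u g`, then `δ (P u)` is its value at `u`. -/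
noncomputable def totalDeriv (D d : Derivation R F F) (g : F) (p : F[X]) : F[X] :=
  mapCoeffsDeriv D p + X * mapCoeffsDeriv d p + C g * (X * derivative p)

theorem coeff_totalDeriv_zero (D d : Derivation R F F) (g : F) (p : F[X]) :
    (totalDeriv D d g p).coeff 0 = D (p.coeff 0) := by
  simp [totalDeriv, coeff_mapCoeffsDeriv]

theorem coeff_totalDeriv_succ (D d : Derivation R F F) (g : F) (p : F[X]) (i : ℕ) :
    (totalDeriv D d g p).coeff (i + 1) =
      D (p.coeff (i + 1)) + d (p.coeff i) + (i + 1) * g * p.coeff (i + 1) := by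
  simp only [totalDeriv, coeff_add, coeff_mapCoeffsDeriv, coeff_X_mul, coeff_C_mul,
    coeff_derivative]
  ring

theorem natDegree_totalDeriv_le (D d : Derivation R F F) (g : F) {p : F[X]} (hp : p.Monic) :
    (totalDeriv D d g p).natDegree ≤ p.natDegree := by
  rw [natDegree_le_iff_coeff_eq_zero]
  intro N hN
  obtain ⟨i, rfl⟩ := Nat.exists_eq_succ_of_ne_zero hN.ne_bot
  have hdi : d (p.coeff i) = 0 := by
    obtain hi | hi := (Nat.lt_succ_iff.mp hN).eq_or_lt
    · rw [← hi, hp.coeff_natDegree, d.map_one_eq_zero]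
    · rw [coeff_eq_zero_of_natDegree_lt hi, map_zero]
  rw [Nat.succ_eq_add_one, coeff_totalDeriv_succ, hdi, coeff_eq_zero_of_natDegree_lt hN]
  simp

theorem derivation_aeval_eq_aeval_totalDeriv {D d : Derivation R F F} {δ : Derivation R L L} {u : L}
    (hδ : ∀ x, δ (algebraMap F L x) = algebraMap F L (D x) + u * algebraMap F L (d x)) {g : F}
    (hg : δ u = u * algebraMap F L g) (p : F[X]) :
    δ (aeval u p) = aeval u (totalDeriv D d g p) := by
  induction p using Polynomial.induction_on' with
  | add p q hp hq =>
    rw [map_add, map_add, hp, hq, ← map_add]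
    congr 1
    simp only [totalDeriv, map_add]
    ring
  | monomial n a =>
    simp only [totalDeriv, mapCoeffsDeriv_monomial, derivative_monomial, map_add, map_mul,
      aeval_monomial, aeval_X, aeval_C, δ.leibniz, δ.leibniz_pow, hδ, hg, smul_eq_mul,
      nsmul_eq_mul, map_natCast]
    obtain _ | n := n
    · simp
    · simp only [add_tsub_cancel_right]
      ring

theorem exists_derivation_eq_of_isIntegral {D d : Derivation R F F} {δ : Derivation R L L} {u : L}
    (hδ : ∀ x, δ (algebraMap F L x) = algebraMap F L (D x) + u * algebraMap F L (d x)) {g : F}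
    (hg : δ u = u * algebraMap F L g) (hu : IsIntegral F u) (hu0 : u ≠ 0) :
    ∃ n : ℕ, n ≠ 0 ∧ ∃ a ≠ 0, ∃ b, D a = (d b + n * g) * a := by
  set p := minpoly F u
  set q := totalDeriv D d g p with hq
  have hmonic : p.Monic := minpoly.monic hu
  have hdvd : p ∣ q := minpoly.dvd F u (by
    rw [← derivation_aeval_eq_aeval_totalDeriv hδ hg, minpoly.aeval, map_zero])
  obtain ⟨i, hi⟩ := Nat.exists_eq_succ_of_ne_zero (minpoly.natDegree_pos hu).ne'
  have hqp : q = C q.leadingCoeff * p := eq_leadingCoeff_mul_of_monic_of_dvd_of_natDegree_le hmonic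
    hdvd (natDegree_totalDeriv_le D d g hmonic)
  have hlead : p.coeff (i + 1) = 1 := by
    rw [← Nat.succ_eq_add_one, ← hi, hmonic.coeff_natDegree]
  have htop : q.leadingCoeff = d (p.coeff i) + (i + 1 : ℕ) * g := by
    have h := congrArg (coeff · (i + 1)) hqp
    simp only [coeff_C_mul, hlead, hq, coeff_totalDeriv_succ, D.map_one_eq_zero] at h
    rw [← mul_one q.leadingCoeff, hq, ← h]
    push_cast
    ring
  refine ⟨i + 1, i.succ_ne_zero, p.coeff 0, minpoly.coeff_zero_ne_zero hu hu0, p.coeff i, ?_⟩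
  rw [← htop, ← coeff_totalDeriv_zero D d g, ← coeff_C_mul, ← hqp]

end AlgebraicRelation

section ExtensionOfConstants

variable {k : Type*} (K : Type*) [Field k] [Field K] [Algebra k K]

/-- The inclusion `k(X) → K(X)` induced by a field extension `K / k`. -/
noncomputable def extendScalars : RatFunc k →+* RatFunc K :=
  RatFunc.mapRingHom (mapRingHom (algebraMap k K))
    (nonZeroDivisors_le_comap_nonZeroDivisors_of_injective _
      (map_injective _ (algebraMap k K).injective))

variable {K}

theorem extendScalars_eq_div (f : RatFunc k) :
    extendScalars K f = algebraMap K[X] (RatFunc K) (f.num.map (algebraMap k K)) /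
      algebraMap K[X] (RatFunc K) (f.denom.map (algebraMap k K)) :=
  RatFunc.map_apply (mapRingHom (algebraMap k K))
    (nonZeroDivisors_le_comap_nonZeroDivisors_of_injective _
      (map_injective _ (algebraMap k K).injective)) f

theorem extendScalars_algebraMap (p : k[X]) :
    extendScalars K (algebraMap k[X] (RatFunc k) p) =
      algebraMap K[X] (RatFunc K) (p.map (algebraMap k K)) := by
  simp [extendScalars_eq_div]

theorem extendScalars_ratDeriv (f : RatFunc k) :
    extendScalars K (ratDeriv k f) = ratDeriv K (extendScalars K f) := by
  have hden : f.denom.map (algebraMap k K) ≠ 0 :=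
    (Polynomial.map_ne_zero_iff (algebraMap k K).injective).mpr f.denom_ne_zero
  rw [extendScalars_eq_div f, ratDeriv_algebraMap_div _ hden]
  nth_rw 1 [← f.num_div_denom]
  rw [ratDeriv_algebraMap_div _ f.denom_ne_zero]
  simp [extendScalars_algebraMap, derivative_map]

theorem mapCoeffsDeriv_map_algebraMap (d : Derivation k K K) (p : k[X]) :
    mapCoeffsDeriv d (p.map (algebraMap k K)) = 0 := by
  ext i
  simp [coeff_mapCoeffsDeriv]

end ExtensionOfConstants

universe u

section DifferentialExtension

variable {k L : Type u} {K : Type*} [Field k] [Field K] [Field L] [Algebra k K] [Algebra k L]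
  [Algebra K L] [Algebra (RatFunc K) L] [IsScalarTower K (RatFunc K) L]

theorem algebraMap_algebraMap_eq_aeval (p : K[X]) :
    algebraMap (RatFunc K) L (algebraMap K[X] (RatFunc K) p) =
      aeval (algebraMap (RatFunc K) L RatFunc.X) p := by
  rw [aeval_algebraMap_apply, ← RatFunc.algebraMap_X, aeval_algebraMap_apply, aeval_X_left_apply]

theorem eval_eq_algebraMap_extendScalars [IsScalarTower k K L] (f : RatFunc k) :
    RatFunc.eval (algebraMap k L) (algebraMap (RatFunc K) L RatFunc.X) f =
      algebraMap (RatFunc K) L (extendScalars K f) := by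
  rw [extendScalars_eq_div, map_div₀, algebraMap_algebraMap_eq_aeval,
    algebraMap_algebraMap_eq_aeval, aeval_map_algebraMap, aeval_map_algebraMap]
  rfl

theorem derivation_algebraMap_ratFunc [IsScalarTower k K L] {d : Derivation k K K}
    {δ : Derivation k L L} (hd : ∀ x, δ (algebraMap K L x) = algebraMap K L (d x)) (x : RatFunc K) :
    δ (algebraMap (RatFunc K) L x) = algebraMap (RatFunc K) L (coeffDeriv d x) +
      δ (algebraMap (RatFunc K) L RatFunc.X) * algebraMap (RatFunc K) L (ratDeriv K x) := by
  have : IsScalarTower k (RatFunc K) L := .of_algebraMap_eq fun c ↦ by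
    rw [IsScalarTower.algebraMap_apply k K L, IsScalarTower.algebraMap_apply k K (RatFunc K),
      ← IsScalarTower.algebraMap_apply K (RatFunc K) L]
  let ι := Algebra.linearMap (RatFunc K) L
  suffices δ.compAlgebraMap (RatFunc K) = ι.compDer (coeffDeriv d) +
      δ (ι RatFunc.X) • ι.compDer ((ratDeriv K).restrictScalars k) from congr($this x)
  refine derivation_ext_of_isFractionRing fun p : K[X] ↦ ?_
  simpa [ι, algebraMap_algebraMap_eq_aeval, ratDeriv_algebraMap, coeffDeriv_algebraMap, mul_comm]
    using derivation_aeval_eq hd (algebraMap (RatFunc K) L RatFunc.X) p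

theorem transcendental_derivation_algebraMap_X [CharZero k] [IsScalarTower k K L]
    {d : Derivation k K K} {δ : Derivation k L L}
    (hd : ∀ x, δ (algebraMap K L x) = algebraMap K L (d x)) {f : RatFunc k}
    (hf : f ∉ Set.range (ratDeriv k)) {y : L} (hy : algebraMap (RatFunc K) L RatFunc.X = y)
    (heq : δ (δ y) = δ y * RatFunc.eval (algebraMap k L) y f) (hy' : δ y ≠ 0) :
    Transcendental (RatFunc K) (δ y) := by
  subst hy
  intro halg
  rw [eval_eq_algebraMap_extendScalars] at heq
  obtain ⟨n, hn, a, ha, b, hab⟩ := exists_derivation_eq_of_isIntegral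
    (d := (ratDeriv K).restrictScalars k) (derivation_algebraMap_ratFunc hd) heq halg.isIntegral hy'
  have := charZero_of_injective_algebraMap (algebraMap k K).injective
  obtain ⟨h, p, q, hsep, hq, hpq, rfl⟩ := exists_eq_ratDeriv_add_div_of_notMem_range hf
  refine coeffDeriv_ne_of_constant_pole (hsep.map (f := algebraMap k K))
    (by rwa [isUnit_map]) (hpq.map (mapRingHom (algebraMap k K)))
    (mapCoeffsDeriv_map_algebraMap d q) (Nat.cast_ne_zero.mpr hn) ha (b + n • extendScalars K h) ?_
  rw [hab, Derivation.restrictScalars_apply, map_add (ratDeriv K), map_nsmul]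
  simp only [map_add, map_div₀, nsmul_eq_mul, Int.cast_natCast, extendScalars_ratDeriv,
    extendScalars_algebraMap, coe_mapRingHom]
  ring

theorem algebraicIndependent_pair_of_transcendental {u : L} (hu : Transcendental (RatFunc K) u) :
    AlgebraicIndependent K ![algebraMap (RatFunc K) L RatFunc.X, u] := by
  have hX : AlgebraicIndependent K fun _ : Unit ↦ (RatFunc.X : RatFunc K) :=
    algebraicIndependent_unique_type_iff.mpr RatFunc.transcendental_X
  have hu' : AlgebraicIndependent (RatFunc K) fun _ : Unit ↦ u :=
    algebraicIndependent_unique_type_iff.mpr hu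
  convert! (hX.sumElim_comp hu').comp ![.inr (), .inl ()] (by decide)
  ext i
  fin_cases i <;> rfl

end DifferentialExtension

theorem poizat_strongly_minimal_general {k L : Type u} [Field k] [CharZero k] [Field L]
    [Algebra k L] (δ : Derivation k L L) (K : IntermediateField k L) (hK : ∀ x ∈ K, δ x ∈ K)
    (f : RatFunc k) (hf : f ∉ Set.range (ratDeriv k)) (y : L)
    (heq : δ (δ y) = δ y * RatFunc.eval (algebraMap k L) y f) (hy' : δ y ≠ 0)
    (htr : Transcendental K y) : AlgebraicIndependent K ![y, δ y] := by
  let d : Derivation k K K := Derivation.mk'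
    ((δ.toLinearMap ∘ₗ K.val.toLinearMap).codRestrict K.toSubalgebra.toSubmodule fun x ↦ hK x x.2)
    fun a b ↦ Subtype.ext (δ.leibniz (a : L) b)
  let φ : RatFunc K →ₐ[K] L :=
    (IntermediateField.val _).comp (RatFunc.algEquivOfTranscendental y htr).toAlgHom
  let _ : Algebra (RatFunc K) L := φ.toAlgebra
  have : IsScalarTower K (RatFunc K) L := .of_algebraMap_eq fun x ↦ (φ.commutes x).symm
  have hX : algebraMap (RatFunc K) L RatFunc.X = y :=
    RatFunc.algEquivOfTranscendental_X y htr
  have htrans : Transcendental (RatFunc K) (δ y) :=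
    transcendental_derivation_algebraMap_X (d := d) (fun _ ↦ rfl) hf hX heq hy'
  simpa only [hX] using algebraicIndependent_pair_of_transcendental htrans

/-- Strong minimality of the Poizat equation `z'' = z' · f(z)`, `z' ≠ 0`,
for `f ∈ ℂ(z)` not the derivative of a rational function: over any differential
subfield `K ⊇ ℂ`, a solution `y` transcendental over `K` has `y, δy` algebraically
independent over `K`. -/
theorem poizat_strongly_minimal
    {L : Type} [Field L] [Algebra ℂ L]
    (δ : L → L)
    (hadd : ∀ a b : L, δ (a + b) = δ a + δ b)
    (hmul : ∀ a b : L, δ (a * b) = a * δ b + b * δ a)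
    (hδC : ∀ c : ℂ, δ (algebraMap ℂ L c) = 0)
    (K : IntermediateField ℂ L) (hK : ∀ x ∈ K, δ x ∈ K)
    (f : RatFunc ℂ)
    (hf : ¬ ∃ r s : Polynomial ℂ, s ≠ 0 ∧
      f = algebraMap (Polynomial ℂ) (RatFunc ℂ)
            (Polynomial.derivative r * s - r * Polynomial.derivative s) /
          algebraMap (Polynomial ℂ) (RatFunc ℂ) (s ^ 2))
    (y : L)
    (heq : δ (δ y) = δ y * RatFunc.eval (algebraMap ℂ L) y f)
    (hy' : δ y ≠ 0)
    (htr : Transcendental K y) :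
    AlgebraicIndependent K ![y, δ y] := by
  let D : Derivation ℂ L L := Derivation.mk'
    { toFun := δ, map_add' := hadd, map_smul' := fun c x ↦ by simp [Algebra.smul_def, hmul, hδC] }
    hmul
  exact poizat_strongly_minimal_general D K hK f (mem_range_ratDeriv_iff.not.mpr hf) y heq hy' htr
end

section
/- Let α₁, α₂, α₃ ∈ ℂ be algebraically independent over ℚ. For i = 1, 2, 3 set Aᵢ = ∏_{j ≠ i} (αᵢ − αⱼ)^{−1}, and set a = α₁ + α₂ + α₃ and b = α₁α₂ + α₁α₃ + α₂α₃. If m₁, m₂, m₃ ∈ ℚ and the element m₁A₁ + m₂A₂ + m₃A₃ is algebraic over the subfield ℚ(a, b) of ℂ, then m₁ = m₂ = m₃. -/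
/-! The differences `u = α₁ - α₂` and `v = α₂ - α₃` satisfy `u² + uv + v² = a² - 3b` and
`m₁A₁ + m₂A₂ + m₃A₃ = ((m₁ - m₂)v + (m₃ - m₂)u) / (uv(u + v))`. The first expression is homogeneous
of degree `2` and the second of degree `-2`, so their product depends only on the ratio `t = v / u`.
If both expressions are algebraic over `ℚ(a, b)` and the `mᵢ` are not all equal, this product gives
a nontrivial cubic equation for `t`; then `t`, hence `u` and `v`, hence every `αᵢ` is algebraic over
`ℚ(a, b)`. This is impossible, since `ℚ(a, b)` has transcendence degree at most `2` over `ℚ`. -/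

section Ring

open Polynomial

variable {R S : Type*} [CommRing R] [CommRing S] [IsDomain S] [Algebra R S]

theorem enatCard_le_encard_of_isAlgebraic_adjoin {ι : Type*} {x : ι → S} {s : Set S}
    (hx : AlgebraicIndependent R x) (halg : ∀ i, IsAlgebraic (Algebra.adjoin R s) (x i)) :
    ENat.card ι ≤ s.encard := by
  have := (faithfulSMul_iff_algebraMap_injective R S).mpr hx.algebraMap_injective
  have := (algebraMap R S).domain_nontrivial
  let M := AlgebraicIndependent.matroid R S
  have hindep : M.Indep (Set.range x) := hx.to_subtype_range
  have hsub : Set.range x ⊆ M.closure s := by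
    rintro _ ⟨i, rfl⟩
    rw [AlgebraicIndependent.matroid_closure_eq]
    exact halg i
  calc
    ENat.card ι = (Set.range x).encard := by
      rw [← Set.image_univ, hx.injective.encard_image, Set.encard_univ]
    _ ≤ M.eRk (M.closure s) := hindep.encard_le_eRk_of_subset hsub
    _ = M.eRk s := M.eRk_closure_eq s
    _ ≤ s.encard := M.eRk_le_encard s

theorem isAlgebraic_of_isRoot_of_isAlgebraic_coeff [IsDomain R] {P : S[X]} {t : S} (hP : P ≠ 0)
    (hcoeff : ∀ n, IsAlgebraic R (P.coeff n)) (ht : P.IsRoot t) : IsAlgebraic R t := by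
  obtain ⟨Q, rfl⟩ : ∃ Q : (Subalgebra.algebraicClosure R S)[X], Q.map (algebraMap _ S) = P :=
    (lifts_iff_coeff_lifts P).mpr fun n ↦ ⟨⟨P.coeff n, hcoeff n⟩, rfl⟩
  have hQ : IsAlgebraic (Subalgebra.algebraicClosure R S) t :=
    ⟨Q, fun h ↦ hP (by rw [h, Polynomial.map_zero]), by rwa [aeval_def, ← eval_map]⟩
  exact hQ.restrictScalars R

theorem isAlgebraic_of_isRoot_cubic [IsDomain R] {P : Cubic S} {t : S} (hP : P ≠ 0)
    (ha : IsAlgebraic R P.a) (hb : IsAlgebraic R P.b) (hc : IsAlgebraic R P.c)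
    (hd : IsAlgebraic R P.d) (ht : P.toPoly.IsRoot t) : IsAlgebraic R t := by
  refine isAlgebraic_of_isRoot_of_isAlgebraic_coeff (mt P.toPoly_eq_zero_iff.mp hP) ?_ ht
  rintro (_ | _ | _ | _ | n)
  · rwa [Cubic.coeff_eq_d]
  · rwa [Cubic.coeff_eq_c]
  · rwa [Cubic.coeff_eq_b]
  · rwa [Cubic.coeff_eq_a]
  · rw [Cubic.coeff_eq_zero (by omega)]
    exact isAlgebraic_zero

end Ring

section AlgebraicIndependent

variable {R S : Type*} [CommRing R] [CommRing S] [Algebra R S]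

theorem aeval_ne_zero_of_eval_ne_zero {ι : Type*} {x : ι → S} (hx : AlgebraicIndependent R x)
    {P : MvPolynomial ι R} {c : ι → R} (hP : MvPolynomial.eval c P ≠ 0) :
    MvPolynomial.aeval x P ≠ 0 :=
  fun h ↦ hP (by rw [hx.eq_zero_of_aeval_eq_zero P h, map_zero])

variable [Nontrivial R] {α₁ α₂ α₃ : S}

theorem add_add_ne_zero_of_algebraicIndependent (hα : AlgebraicIndependent R ![α₁, α₂, α₃]) :
    α₁ + α₂ + α₃ ≠ 0 := by
  let P : MvPolynomial (Fin 3) R := .X 0 + .X 1 + .X 2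
  have hP : MvPolynomial.eval ![1, 0, 0] P ≠ 0 := by simp [P]
  simpa [P] using aeval_ne_zero_of_eval_ne_zero hα hP

theorem sub_quadratic_ne_zero_of_algebraicIndependent
    (hα : AlgebraicIndependent R ![α₁, α₂, α₃]) :
    (α₁ - α₂) ^ 2 + (α₁ - α₂) * (α₂ - α₃) + (α₂ - α₃) ^ 2 ≠ 0 := by
  let P : MvPolynomial (Fin 3) R :=
    (.X 0 - .X 1) ^ 2 + (.X 0 - .X 1) * (.X 1 - .X 2) + (.X 1 - .X 2) ^ 2
  have hP : MvPolynomial.eval ![1, 0, 0] P ≠ 0 := by simp [P]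
  simpa [P] using aeval_ne_zero_of_eval_ne_zero hα hP

end AlgebraicIndependent

section Field

open Polynomial

variable {R E : Type*} [CommRing R] [IsDomain R] [Field E] [Algebra R E]

theorem isAlgebraic_div_of_isAlgebraic_quadratic {p q u v θ : E} (hu : u ≠ 0)
    (hp : IsAlgebraic R p) (hq : IsAlgebraic R q) (hpq : p ≠ 0 ∨ q ≠ 0)
    (hD : IsAlgebraic R (u ^ 2 + u * v + v ^ 2)) (hθ : IsAlgebraic R θ)
    (hrel : p * v + q * u = θ * (u * v * (u + v))) : IsAlgebraic R (v / u) := by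
  -- `(pt + q)(1 + t + t²) = θ(u² + uv + v²)t(1 + t)` for `t = v / u`
  let c := p + q - θ * (u ^ 2 + u * v + v ^ 2)
  have hc : IsAlgebraic R c := (hp.add hq).sub (hθ.mul hD)
  have hP : (⟨p, c, c, q⟩ : Cubic E) ≠ 0 := fun h ↦
    hpq.elim (· (congrArg Cubic.a h)) (· (congrArg Cubic.d h))
  refine isAlgebraic_of_isRoot_cubic hP hp hc hc hq ?_
  simp only [Cubic.toPoly, IsRoot.def, eval_add, eval_mul, eval_C, eval_pow, eval_X, c]
  field_simp
  linear_combination (u ^ 2 + u * v + v ^ 2) * hrel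

theorem isAlgebraic_of_isAlgebraic_quadratic_of_div {u v : E} (hu : u ≠ 0)
    (hD₀ : u ^ 2 + u * v + v ^ 2 ≠ 0) (hD : IsAlgebraic R (u ^ 2 + u * v + v ^ 2))
    (ht : IsAlgebraic R (v / u)) : IsAlgebraic R u ∧ IsAlgebraic R v := by
  have hDu : u ^ 2 * (1 + v / u + (v / u) ^ 2) = u ^ 2 + u * v + v ^ 2 := by field_simp
  have hs : 1 + v / u + (v / u) ^ 2 ≠ 0 := right_ne_zero_of_mul (hDu ▸ hD₀)
  have hu_sq : IsAlgebraic R (u ^ 2) := by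
    rw [eq_div_of_mul_eq hs hDu, div_eq_mul_inv]
    exact hD.mul ((isAlgebraic_one.add ht).add (ht.pow 2)).inv
  have hu_alg : IsAlgebraic R u := hu_sq.of_pow two_pos
  exact ⟨hu_alg, div_mul_cancel₀ v hu ▸ ht.mul hu_alg⟩

theorem isAlgebraic_of_isAlgebraic_sub_of_isAlgebraic_esymm_two {α₁ α₂ α₃ : E}
    (ha₀ : α₁ + α₂ + α₃ ≠ 0) (hb : IsAlgebraic R (α₁ * α₂ + α₁ * α₃ + α₂ * α₃))
    (hu : IsAlgebraic R (α₁ - α₂)) (hv : IsAlgebraic R (α₂ - α₃)) :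
    IsAlgebraic R α₁ ∧ IsAlgebraic R α₂ ∧ IsAlgebraic R α₃ := by
  -- Expanding `b` around `α₂` gives a quadratic equation that also serves in characteristic `3`.
  let P : Cubic E := ⟨0, 3, 2 * ((α₁ - α₂) - (α₂ - α₃)),
    -((α₁ - α₂) * (α₂ - α₃) + (α₁ * α₂ + α₁ * α₃ + α₂ * α₃))⟩
  have hP : P ≠ 0 := by
    intro h
    have h₃ : (3 : E) = 0 := congrArg Cubic.b h
    have h₂ : 2 * ((α₁ - α₂) - (α₂ - α₃)) = 0 := congrArg Cubic.c h
    exact ha₀ (by linear_combination (α₁ - α₂ + α₃) * h₃ - h₂)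
  have h₂ : IsAlgebraic R α₂ := by
    refine isAlgebraic_of_isRoot_cubic hP isAlgebraic_zero (isAlgebraic_natCast 3)
      ((isAlgebraic_natCast 2).mul (hu.sub hv)) ((hu.mul hv).add hb).neg ?_
    simp only [P, Cubic.toPoly, IsRoot.def, eval_add, eval_mul, eval_C, eval_pow, eval_X]
    ring
  exact ⟨sub_add_cancel α₁ α₂ ▸ hu.add h₂, h₂, sub_sub_cancel α₂ α₃ ▸ h₂.sub hv⟩

theorem residue_combination_mul_eq {α₁ α₂ α₃ : E} (m₁ m₂ m₃ : E)
    (h₁₂ : α₁ ≠ α₂) (h₁₃ : α₁ ≠ α₃) (h₂₃ : α₂ ≠ α₃) :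
    (m₁ * ((α₁ - α₂) * (α₁ - α₃))⁻¹ + m₂ * ((α₂ - α₁) * (α₂ - α₃))⁻¹ +
        m₃ * ((α₃ - α₁) * (α₃ - α₂))⁻¹) * ((α₁ - α₂) * (α₂ - α₃) * (α₁ - α₂ + (α₂ - α₃))) =
      (m₁ - m₂) * (α₂ - α₃) + (m₃ - m₂) * (α₁ - α₂) := by
  have hu₀ : α₁ - α₂ ≠ 0 := sub_ne_zero.mpr h₁₂
  have huv₀ : α₁ - α₃ ≠ 0 := sub_ne_zero.mpr h₁₃
  have hv₀ : α₂ - α₃ ≠ 0 := sub_ne_zero.mpr h₂₃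
  rw [← neg_sub α₁ α₂, ← neg_sub α₁ α₃, ← neg_sub α₂ α₃]
  field_simp
  ring

theorem isAlgebraic_of_isAlgebraic_residue_combination {α₁ α₂ α₃ m₁ m₂ m₃ : E}
    (h₁₂ : α₁ ≠ α₂) (h₁₃ : α₁ ≠ α₃) (h₂₃ : α₂ ≠ α₃) (ha₀ : α₁ + α₂ + α₃ ≠ 0)
    (hD₀ : (α₁ - α₂) ^ 2 + (α₁ - α₂) * (α₂ - α₃) + (α₂ - α₃) ^ 2 ≠ 0)
    (ha : IsAlgebraic R (α₁ + α₂ + α₃)) (hb : IsAlgebraic R (α₁ * α₂ + α₁ * α₃ + α₂ * α₃))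
    (hm₁ : IsAlgebraic R m₁) (hm₂ : IsAlgebraic R m₂) (hm₃ : IsAlgebraic R m₃)
    (hm : ¬(m₁ = m₂ ∧ m₂ = m₃))
    (hθ : IsAlgebraic R (m₁ * ((α₁ - α₂) * (α₁ - α₃))⁻¹ + m₂ * ((α₂ - α₁) * (α₂ - α₃))⁻¹ +
      m₃ * ((α₃ - α₁) * (α₃ - α₂))⁻¹)) :
    IsAlgebraic R α₁ ∧ IsAlgebraic R α₂ ∧ IsAlgebraic R α₃ := by
  have hu₀ : α₁ - α₂ ≠ 0 := sub_ne_zero.mpr h₁₂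
  have hD_eq : (α₁ - α₂) ^ 2 + (α₁ - α₂) * (α₂ - α₃) + (α₂ - α₃) ^ 2 =
      (α₁ + α₂ + α₃) ^ 2 - 3 * (α₁ * α₂ + α₁ * α₃ + α₂ * α₃) := by ring
  have hD : IsAlgebraic R ((α₁ - α₂) ^ 2 + (α₁ - α₂) * (α₂ - α₃) + (α₂ - α₃) ^ 2) :=
    hD_eq ▸ (ha.pow 2).sub ((isAlgebraic_natCast 3).mul hb)
  have hpq : m₁ - m₂ ≠ 0 ∨ m₃ - m₂ ≠ 0 := by
    rwa [sub_ne_zero, sub_ne_zero, ne_comm (a := m₃), ← not_and_or]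
  have ht : IsAlgebraic R ((α₂ - α₃) / (α₁ - α₂)) :=
    isAlgebraic_div_of_isAlgebraic_quadratic hu₀ (hm₁.sub hm₂) (hm₃.sub hm₂) hpq hD hθ
      (residue_combination_mul_eq m₁ m₂ m₃ h₁₂ h₁₃ h₂₃).symm
  obtain ⟨hu, hv⟩ := isAlgebraic_of_isAlgebraic_quadratic_of_div hu₀ hD₀ hD ht
  exact isAlgebraic_of_isAlgebraic_sub_of_isAlgebraic_esymm_two ha₀ hb hu hv

end Field

section FieldExtension

variable {F E : Type*} [Field F] [Field E] [Algebra F E]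

theorem not_forall_isAlgebraic_adjoin_pair {x : Fin 3 → E} (hx : AlgebraicIndependent F x)
    (a b : E) : ¬∀ i, IsAlgebraic (IntermediateField.adjoin F {a, b}) (x i) := by
  intro halg
  have hcard : (3 : ℕ∞) ≤ ({a, b} : Set E).encard := by
    simpa using enatCard_le_encard_of_isAlgebraic_adjoin hx fun i ↦
      IntermediateField.isAlgebraic_adjoin_iff.mp (halg i)
  have hpair : ({a, b} : Set E).encard ≤ 2 :=
    (Set.encard_insert_le {b} a).trans (by rw [Set.encard_singleton, one_add_one_eq_two])
  exact absurd (hcard.trans hpair) (by decide)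

theorem isAlgebraic_adjoin_of_mem {s : Set E} {x : E} (hx : x ∈ s) :
    IsAlgebraic (IntermediateField.adjoin F s) x :=
  isAlgebraic_algebraMap (⟨x, IntermediateField.subset_adjoin F s hx⟩ :
    IntermediateField.adjoin F s)

theorem residue_linear_relation_general {α₁ α₂ α₃ : E}
    (hind : AlgebraicIndependent F ![α₁, α₂, α₃]) {A₁ A₂ A₃ : E}
    (hA₁ : A₁ = ((α₁ - α₂) * (α₁ - α₃))⁻¹)
    (hA₂ : A₂ = ((α₂ - α₁) * (α₂ - α₃))⁻¹)
    (hA₃ : A₃ = ((α₃ - α₁) * (α₃ - α₂))⁻¹)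
    {a b : E} (hab : a = α₁ + α₂ + α₃) (hbb : b = α₁ * α₂ + α₁ * α₃ + α₂ * α₃)
    {m₁ m₂ m₃ : E} (hm₁ : IsAlgebraic (IntermediateField.adjoin F {a, b}) m₁)
    (hm₂ : IsAlgebraic (IntermediateField.adjoin F {a, b}) m₂)
    (hm₃ : IsAlgebraic (IntermediateField.adjoin F {a, b}) m₃)
    (halg : IsAlgebraic (IntermediateField.adjoin F {a, b}) (m₁ * A₁ + m₂ * A₂ + m₃ * A₃)) :
    m₁ = m₂ ∧ m₂ = m₃ := by
  subst hA₁ hA₂ hA₃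
  have h₁₂ : α₁ ≠ α₂ := hind.injective.ne (a₁ := 0) (a₂ := 1) (by decide)
  have h₁₃ : α₁ ≠ α₃ := hind.injective.ne (a₁ := 0) (a₂ := 2) (by decide)
  have h₂₃ : α₂ ≠ α₃ := hind.injective.ne (a₁ := 1) (a₂ := 2) (by decide)
  let K := IntermediateField.adjoin F {a, b}
  have ha : IsAlgebraic K (α₁ + α₂ + α₃) :=
    hab ▸ isAlgebraic_adjoin_of_mem (Set.mem_insert a {b})
  have hb : IsAlgebraic K (α₁ * α₂ + α₁ * α₃ + α₂ * α₃) :=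
    hbb ▸ isAlgebraic_adjoin_of_mem (Set.mem_insert_of_mem a rfl)
  by_contra hm
  obtain ⟨h₁, h₂, h₃⟩ := isAlgebraic_of_isAlgebraic_residue_combination
    h₁₂ h₁₃ h₂₃ (add_add_ne_zero_of_algebraicIndependent hind)
    (sub_quadratic_ne_zero_of_algebraicIndependent hind) ha hb hm₁ hm₂ hm₃ hm halg
  exact not_forall_isAlgebraic_adjoin_pair hind a b
    (by simpa [Fin.forall_fin_succ] using ⟨h₁, h₂, h₃⟩)

end FieldExtension

/-- If `α₁, α₂, α₃ ∈ ℂ` are algebraically independent over `ℚ`,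
`Aᵢ = ∏_{j≠i} (αᵢ - αⱼ)⁻¹`, `a = α₁+α₂+α₃`, `b = α₁α₂+α₁α₃+α₂α₃`, and
`m₁A₁ + m₂A₂ + m₃A₃` is algebraic over `ℚ(a,b)` for rationals `m₁, m₂, m₃`,
then `m₁ = m₂ = m₃`. -/
theorem residue_linear_relation
    (α₁ α₂ α₃ : ℂ) (hind : AlgebraicIndependent ℚ ![α₁, α₂, α₃])
    (A₁ A₂ A₃ : ℂ)
    (hA₁ : A₁ = ((α₁ - α₂) * (α₁ - α₃))⁻¹)
    (hA₂ : A₂ = ((α₂ - α₁) * (α₂ - α₃))⁻¹)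
    (hA₃ : A₃ = ((α₃ - α₁) * (α₃ - α₂))⁻¹)
    (a b : ℂ) (hab : a = α₁ + α₂ + α₃) (hbb : b = α₁ * α₂ + α₁ * α₃ + α₂ * α₃)
    (m₁ m₂ m₃ : ℚ)
    (halg : IsAlgebraic (IntermediateField.adjoin ℚ ({a, b} : Set ℂ))
      ((m₁ : ℂ) * A₁ + (m₂ : ℂ) * A₂ + (m₃ : ℂ) * A₃)) :
    m₁ = m₂ ∧ m₂ = m₃ := by
  exact_mod_cast residue_linear_relation_general hind hA₁ hA₂ hA₃ hab hbb
    (isAlgebraic_ratCast _ m₁) (isAlgebraic_ratCast _ m₂) (isAlgebraic_ratCast _ m₃) halg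
end
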